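/- Let α ∈ Ξ be non-dyadic, i.e. 2^k·α ∉ ℤ for every integer k ≥ 1. Then for every ε > 0 there exist t, t′ ∈ C_α with α < t < α + ε and α < t′ < α + ε such that t = p/(2^q − 1) for some integers p, q ≥ 1 and t′ = p′/2^{q′} for some integers p′, q′ ≥ 1. In particular, α is an accumulation point both of the non-dyadic rational numbers and of the dyadic rational numbers in C_α. -/

import Mathlib

/-- The set `Ξ` of Head's angles: angles `θ ∈ (0, 1/2]` with `2^k θ ∈ [θ, 1] (mod ℤ)`
for all `k ≥ 0`. -/
def HeadXi : Set ℝ :=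
  {θ : ℝ | 0 < θ ∧ θ ≤ 1/2 ∧ ∀ k : ℕ, ∃ n : ℤ, θ ≤ 2 ^ k * θ - n ∧ 2 ^ k * θ - n ≤ 1}

/-- `C_α`: the set of `t ∈ (0, 1]` with `2^k t ∈ [α, 1] (mod ℤ)` for all `k ≥ 0`. -/
def CSet (α : ℝ) : Set ℝ :=
  {t : ℝ | 0 < t ∧ t ≤ 1 ∧ ∀ k : ℕ, ∃ n : ℤ, α ≤ 2 ^ k * t - n ∧ 2 ^ k * t - n ≤ 1}

/-!
Write `α = 0.a₁a₂a₃…` in binary, and let `d_m = 0.a₁…a_m + 2⁻ᵐ` be the smallest multiple of `2⁻ᵐ`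
above `α`. For `k ≤ m` the doubled point `2ᵏ d_m` is at most `⌊2ᵏ α⌋ + 1`, so for every
`t ∈ [α, d_m]` the point `2ᵏ t` is squeezed, modulo `ℤ`, between `2ᵏ α ∈ [α, 1]` and `1`. Hence only
the tail of the orbit of `t` has to be controlled: the orbit of `t' = d_m` ends in `ℤ`, and that of
`t = 0.(a₁…a_m 1)(a₁…a_m 1)…` is periodic. The latter lies in `(α, d_m]` as soon as
`a_{m+1} = 0`, which happens for infinitely many `m`.
-/

open Filter Topology

section BinaryDigits

variable {K : Type*} [Field K] [LinearOrder K] [IsStrictOrderedRing K] [FloorRing K]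

theorem fract_two_mul_of_half_le_fract {x : K} (hx : 1 / 2 ≤ Int.fract x) :
    Int.fract (2 * x) = 2 * Int.fract x - 1 := by
  refine Int.fract_eq_iff.2 ⟨by linarith, by linarith [Int.fract_lt_one x], 2 * ⌊x⌋ + 1, ?_⟩
  push_cast
  linarith [Int.self_sub_floor x]

theorem exists_fract_two_pow_mul_lt_half (x : K) : ∃ m : ℕ, Int.fract (2 ^ m * x) < 1 / 2 := by
  by_contra! h
  have doubling (m : ℕ) : 1 - Int.fract (2 ^ m * x) = 2 ^ m * (1 - Int.fract x) := by
    induction m with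
    | zero => simp
    | succ m ih =>
      rw [pow_succ', mul_assoc, fract_two_mul_of_half_le_fract (h m), mul_assoc, ← ih]
      ring
  have gap_pos : 0 < 1 - Int.fract x := sub_pos.2 (Int.fract_lt_one x)
  have := FloorRing.archimedean K
  obtain ⟨m, hm⟩ := pow_unbounded_of_one_lt (1 / (1 - Int.fract x)) (one_lt_two (α := K))
  rw [div_lt_iff₀ gap_pos, ← doubling] at hm
  linarith [Int.fract_nonneg (2 ^ m * x)]

theorem frequently_fract_two_pow_mul_lt_half (x : K) :
    ∃ᶠ m : ℕ in atTop, Int.fract (2 ^ m * x) < 1 / 2 := by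
  refine frequently_atTop.2 fun M ↦ ?_
  obtain ⟨j, hj⟩ := exists_fract_two_pow_mul_lt_half (2 ^ M * x)
  exact ⟨j + M, Nat.le_add_left M j, by rwa [pow_add, mul_assoc]⟩

end BinaryDigits

/-- The arc condition `x ∈ [α, 1] (mod ℤ)`, imposed in `HeadXi` and `CSet` on each point of an
orbit of the doubling map. -/
def InArc (α x : ℝ) : Prop :=
  ∃ n : ℤ, α ≤ x - n ∧ x - n ≤ 1

section InArc

variable {α x t : ℝ}

theorem inArc_intCast (hα : α ≤ 1) (a : ℤ) : InArc α a :=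
  ⟨a - 1, by push_cast; linarith, by push_cast; linarith⟩

theorem InArc.add_intCast (h : InArc α x) (a : ℤ) : InArc α (x + a) := by
  obtain ⟨n, hle, hge⟩ := h
  exact ⟨n + a, by push_cast; linarith, by push_cast; linarith⟩

theorem InArc.le_fract (h : InArc α x) (hx : ∀ n : ℤ, x ≠ n) : α ≤ Int.fract x := by
  obtain ⟨n, hle, hge⟩ := h
  have hlt : x < (n + 1 : ℤ) := lt_of_le_of_ne (by push_cast; linarith) (hx (n + 1))
  have hfloor : (⌊x⌋ : ℝ) ≤ n := by exact_mod_cast Int.lt_add_one_iff.1 (Int.floor_lt.2 hlt)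
  linarith [Int.self_sub_floor x]

theorem inArc_two_pow_mul_of_eq_intCast (hα : α ≤ 1) {q : ℕ} {a : ℤ} (ht : 2 ^ q * t = a)
    (h : ∀ k < q, InArc α (2 ^ k * t)) (k : ℕ) : InArc α (2 ^ k * t) := by
  rcases lt_or_ge k q with hk | hk
  · exact h k hk
  · obtain ⟨j, rfl⟩ := Nat.exists_eq_add_of_le' hk
    rw [pow_add, mul_assoc, ht]
    exact_mod_cast inArc_intCast hα (2 ^ j * a)

theorem inArc_two_pow_mul_of_eq_add_intCast {q : ℕ} (hq : 0 < q) {a : ℤ}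
    (ht : 2 ^ q * t = t + a) (h : ∀ k < q, InArc α (2 ^ k * t)) (k : ℕ) :
    InArc α (2 ^ k * t) := by
  induction k using Nat.strong_induction_on with
  | _ k ih =>
    rcases lt_or_ge k q with hk | hk
    · exact h k hk
    · obtain ⟨j, rfl⟩ := Nat.exists_eq_add_of_le' hk
      rw [pow_add, mul_assoc, ht, mul_add]
      exact_mod_cast (ih j (Nat.lt_add_of_pos_right hq)).add_intCast (2 ^ j * a)

end InArc

theorem HeadXi.le_fract_two_pow_mul {α : ℝ} (hα : α ∈ HeadXi)
    (hnd : ∀ k : ℕ, 1 ≤ k → ∀ n : ℤ, 2 ^ k * α ≠ n) (k : ℕ) : α ≤ Int.fract (2 ^ k * α) := by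
  refine InArc.le_fract (hα.2.2 k) fun n hn ↦ hnd (k + 1) (Nat.le_add_left 1 k) (2 * n) ?_
  push_cast
  rw [pow_succ', mul_assoc, hn]

/-- The smallest multiple of `2⁻ᵐ` that is strictly greater than `α`: the dyadic approximation
of `α` from above at level `m`. -/
noncomputable def dyadicAbove (α : ℝ) (m : ℕ) : ℝ :=
  (⌊2 ^ m * α⌋ + 1) / 2 ^ m

/-- The number whose binary expansion is the periodic repetition of `a₁…a_m 1`, where `a₁…a_m` are
the first `m` binary digits of `α ∈ [0, 1)`: the periodic approximation of `α` from above,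
available at those `m` for which the digit `a_{m+1}` of `α` is `0`. -/
noncomputable def periodicAbove (α : ℝ) (m : ℕ) : ℝ :=
  (2 * ⌊2 ^ m * α⌋ + 1) / (2 ^ (m + 1) - 1)

section Approximation

variable {α t : ℝ} {k m : ℕ}

theorem two_pow_mul_dyadicAbove (α : ℝ) (m : ℕ) :
    2 ^ m * dyadicAbove α m = (⌊2 ^ m * α⌋ + 1 : ℤ) := by
  rw [dyadicAbove, mul_div_cancel₀ _ (by positivity)]
  push_cast
  rfl

theorem lt_dyadicAbove (α : ℝ) (m : ℕ) : α < dyadicAbove α m := by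
  rw [dyadicAbove, lt_div_iff₀' (by positivity)]
  exact Int.lt_floor_add_one _

theorem dyadicAbove_le_add_inv_two_pow (α : ℝ) (m : ℕ) :
    dyadicAbove α m ≤ α + (2 ^ m)⁻¹ := by
  rw [dyadicAbove, div_le_iff₀' (by positivity), mul_add, mul_inv_cancel₀ (by positivity)]
  gcongr
  exact Int.floor_le _

theorem tendsto_dyadicAbove (α : ℝ) : Tendsto (dyadicAbove α) atTop (𝓝 α) := by
  have upper : Tendsto (fun m : ℕ ↦ α + ((2 : ℝ) ^ m)⁻¹) atTop (𝓝 α) := by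
    simpa only [add_zero, Pi.inv_apply] using
      (tendsto_pow_atTop_atTop_of_one_lt one_lt_two).inv_tendsto_atTop.const_add α
  exact tendsto_of_tendsto_of_tendsto_of_le_of_le tendsto_const_nhds upper
    (fun m ↦ (lt_dyadicAbove α m).le) (dyadicAbove_le_add_inv_two_pow α)

theorem antitone_dyadicAbove (α : ℝ) : Antitone (dyadicAbove α) := by
  refine antitone_nat_of_succ_le fun m ↦ ?_
  have hfloor : ⌊2 ^ (m + 1) * α⌋ < 2 * (⌊2 ^ m * α⌋ + 1) := by
    refine Int.floor_lt.2 ?_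
    push_cast
    rw [pow_succ', mul_assoc]
    gcongr
    exact Int.lt_floor_add_one _
  have hcast : (⌊2 ^ (m + 1) * α⌋ + 1 : ℝ) ≤ 2 * (⌊2 ^ m * α⌋ + 1) := by exact_mod_cast hfloor
  rw [dyadicAbove, dyadicAbove, div_le_div_iff₀ (by positivity) (by positivity)]
  calc (⌊2 ^ (m + 1) * α⌋ + 1 : ℝ) * 2 ^ m ≤ 2 * (⌊2 ^ m * α⌋ + 1) * 2 ^ m := by gcongr
    _ = (⌊2 ^ m * α⌋ + 1) * 2 ^ (m + 1) := by ring

theorem dyadicAbove_le_one (hα : α < 1) (m : ℕ) : dyadicAbove α m ≤ 1 := by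
  have hfloor : ⌊2 ^ m * α⌋ < 2 ^ m :=
    Int.floor_lt.2 (by push_cast; exact mul_lt_of_lt_one_right (by positivity) hα)
  rw [dyadicAbove, div_le_one (by positivity)]
  exact_mod_cast hfloor

theorem two_pow_succ_sub_one_pos (m : ℕ) : (0 : ℝ) < 2 ^ (m + 1) - 1 :=
  sub_pos.2 (one_lt_pow₀ one_lt_two m.succ_ne_zero)

theorem two_pow_succ_mul_periodicAbove (α : ℝ) (m : ℕ) :
    2 ^ (m + 1) * periodicAbove α m = periodicAbove α m + (2 * ⌊2 ^ m * α⌋ + 1 : ℤ) := by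
  have hden := (two_pow_succ_sub_one_pos m).ne'
  rw [periodicAbove]
  field_simp
  push_cast
  ring

theorem lt_periodicAbove (hα : 0 ≤ α) (hm : Int.fract (2 ^ m * α) < 1 / 2) :
    α < periodicAbove α m := by
  rw [periodicAbove, lt_div_iff₀ (two_pow_succ_sub_one_pos m), pow_succ]
  linarith [Int.self_sub_floor (2 ^ m * α)]

theorem periodicAbove_le_one (hα : α < 1) (m : ℕ) : periodicAbove α m ≤ 1 := by
  have htop : (⌊2 ^ m * α⌋ + 1 : ℝ) ≤ 2 ^ m :=
    (div_le_one (by positivity)).1 (dyadicAbove_le_one hα m)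
  rw [periodicAbove, div_le_one (two_pow_succ_sub_one_pos m), pow_succ]
  linarith

theorem periodicAbove_le_dyadicAbove (hα : α < 1) (m : ℕ) :
    periodicAbove α m ≤ dyadicAbove α m := by
  have hper := two_pow_succ_mul_periodicAbove α m
  push_cast [pow_succ] at hper
  rw [dyadicAbove, le_div_iff₀' (by positivity)]
  linarith [periodicAbove_le_one hα m]

theorem inArc_two_pow_mul_of_le_dyadicAbove (hα : α ≤ Int.fract (2 ^ k * α)) (hkm : k ≤ m)
    (hαt : α ≤ t) (htm : t ≤ dyadicAbove α m) : InArc α (2 ^ k * t) := by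
  refine ⟨⌊2 ^ k * α⌋, ?_, ?_⟩
  · calc α ≤ 2 ^ k * α - ⌊2 ^ k * α⌋ := hα
      _ ≤ 2 ^ k * t - ⌊2 ^ k * α⌋ := by gcongr
  · have htk : t ≤ (⌊2 ^ k * α⌋ + 1) / 2 ^ k := htm.trans (antitone_dyadicAbove α hkm)
    rw [le_div_iff₀' (by positivity)] at htk
    linarith

theorem exists_dyadicAbove_eq_div (hα : 0 ≤ α) (m : ℕ) :
    ∃ p q : ℕ, 1 ≤ p ∧ 1 ≤ q ∧ dyadicAbove α m = (p : ℝ) / 2 ^ q := by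
  obtain ⟨n, hn⟩ := Int.eq_ofNat_of_zero_le (Int.floor_nonneg.2 (by positivity : 0 ≤ 2 ^ m * α))
  refine ⟨2 * (n + 1), m + 1, by lia, by lia, ?_⟩
  rw [dyadicAbove, hn, pow_succ']
  push_cast
  rw [mul_div_mul_left _ _ two_ne_zero]

theorem exists_periodicAbove_eq_div (hα : 0 ≤ α) (m : ℕ) :
    ∃ p q : ℕ, 1 ≤ p ∧ 1 ≤ q ∧ periodicAbove α m = (p : ℝ) / (2 ^ q - 1) := by
  obtain ⟨n, hn⟩ := Int.eq_ofNat_of_zero_le (Int.floor_nonneg.2 (by positivity : 0 ≤ 2 ^ m * α))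
  refine ⟨2 * n + 1, m + 1, by lia, by lia, ?_⟩
  rw [periodicAbove, hn]
  push_cast
  rfl

theorem dyadicAbove_mem_CSet (hα : 0 < α) (horbit : ∀ k : ℕ, α ≤ Int.fract (2 ^ k * α)) (m : ℕ) :
    dyadicAbove α m ∈ CSet α := by
  have hα₁ : α < 1 := (horbit 0).trans_lt (Int.fract_lt_one _)
  have hlt := lt_dyadicAbove α m
  refine ⟨hα.trans hlt, dyadicAbove_le_one hα₁ m, ?_⟩
  exact inArc_two_pow_mul_of_eq_intCast hα₁.le (two_pow_mul_dyadicAbove α m) fun k hk ↦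
    inArc_two_pow_mul_of_le_dyadicAbove (horbit k) hk.le hlt.le le_rfl

theorem periodicAbove_mem_CSet (hα : 0 < α) (horbit : ∀ k : ℕ, α ≤ Int.fract (2 ^ k * α))
    (hm : Int.fract (2 ^ m * α) < 1 / 2) : periodicAbove α m ∈ CSet α := by
  have hα₁ : α < 1 := (horbit 0).trans_lt (Int.fract_lt_one _)
  have hlt := lt_periodicAbove hα.le hm
  refine ⟨hα.trans hlt, periodicAbove_le_one hα₁ m, ?_⟩
  exact inArc_two_pow_mul_of_eq_add_intCast m.succ_pos (two_pow_succ_mul_periodicAbove α m)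
    fun k hk ↦ inArc_two_pow_mul_of_le_dyadicAbove (horbit k) (Nat.le_of_lt_succ hk) hlt.le
      (periodicAbove_le_dyadicAbove hα₁ m)

end Approximation

/-- A non-dyadic `α ∈ Ξ` is an accumulation point both of the non-dyadic rationals
`p/(2^q - 1)` and of the dyadic rationals `p'/2^{q'}` in `C_α`. -/
theorem nondyadic_accumulation_in_CSet (α : ℝ) (hα : α ∈ HeadXi)
    (hnd : ∀ k : ℕ, 1 ≤ k → ∀ n : ℤ, 2 ^ k * α ≠ n) :
    ∀ ε > 0, ∃ t t' : ℝ, t ∈ CSet α ∧ t' ∈ CSet α ∧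
      α < t ∧ t < α + ε ∧ α < t' ∧ t' < α + ε ∧
      (∃ p q : ℕ, 1 ≤ p ∧ 1 ≤ q ∧ t = (p : ℝ) / (2 ^ q - 1)) ∧
      (∃ p' q' : ℕ, 1 ≤ p' ∧ 1 ≤ q' ∧ t' = (p' : ℝ) / 2 ^ q') := by
  intro ε hε
  have hpos : 0 < α := hα.1
  have hlt_one : α < 1 := hα.2.1.trans_lt one_half_lt_one
  have horbit := HeadXi.le_fract_two_pow_mul hα hnd
  obtain ⟨m, hzero, hclose⟩ : ∃ m : ℕ, Int.fract (2 ^ m * α) < 1 / 2 ∧ dyadicAbove α m < α + ε :=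
    ((frequently_fract_two_pow_mul_lt_half α).and_eventually
      ((tendsto_dyadicAbove α).eventually_lt_const (lt_add_of_pos_right α hε))).exists
  exact ⟨periodicAbove α m, dyadicAbove α m,
    periodicAbove_mem_CSet hpos horbit hzero, dyadicAbove_mem_CSet hpos horbit m,
    lt_periodicAbove hpos.le hzero, (periodicAbove_le_dyadicAbove hlt_one m).trans_lt hclose,
    lt_dyadicAbove α m, hclose,
    exists_periodicAbove_eq_div hpos.le m, exists_dyadicAbove_eq_div hpos.le m⟩
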